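/- Let (Ω, P) be a probability space, r₁, r₂ ∈ {0,1} fixed relevance indicators, e₁, e₂ : Ω → {0,1} measurable examination indicators with p₁ = P(e₁ = 1) > 0, p₂ = P(e₂ = 1) > 0, p₁₂ = P(e₁ = 1 and e₂ = 1) > 0, and click indicators c₁(ω) = e₁(ω)·r₁, c₂(ω) = e₂(ω)·r₂. Let a₁ = 1/p₁, a₂ = 1/p₂, a₁₂ = 1/p₁₂ and A be the 4×4 matrix with rows (a₁₂, 0, 0, 0), (a₁ − a₁₂, a₁, 0, 0), (a₂ − a₁₂, 0, a₂, 0), (1 − a₁ − a₂ + a₁₂, 1 − a₁, 1 − a₂, 1). Then for every vector z ∈ ℝ⁴, E[ zᵀ · A · s(c₁(ω), c₂(ω)) ] = zᵀ · s(r₁, r₂). -/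

import Mathlib

open Matrix MeasureTheory

/-- For binary values `b₁, b₂ ∈ {0,1} ⊆ ℝ`, the one-hot pair-type encoding vector
`s(b₁, b₂) = (b₁b₂, b₁(1−b₂), (1−b₁)b₂, (1−b₁)(1−b₂))ᵀ ∈ ℝ⁴`. -/
def svec (b₁ b₂ : ℝ) : Fin 4 → ℝ :=
  ![b₁ * b₂, b₁ * (1 - b₂), (1 - b₁) * b₂, (1 - b₁) * (1 - b₂)]

/-!
The encoding `s(b₁, b₂)` is a fixed linear image of the monomials `m(b₁, b₂) = (b₁b₂, b₁, b₂, 1)`,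
and `A` is the operator that in these coordinates becomes `diag(a₁₂, a₁, a₂, 1)`. Since `m` is
multiplicative, clicks satisfy `m(c) = m(e) m(r)` coordinatewise, and the diagonal entries are the
inverses of the means of the coordinates of `m(e)`. Hence `A s(c)` has mean `s(r)`.
-/

section InverseMeanWeighting

variable {Ω ι 𝕜 : Type*} [MeasurableSpace Ω] [Fintype ι] [RCLike 𝕜] {μ : Measure Ω}

theorem integral_const_dotProduct {X : Ω → ι → 𝕜} (hX : ∀ i, Integrable (fun ω => X ω i) μ)
    (v : ι → 𝕜) : ∫ ω, v ⬝ᵥ X ω ∂μ = v ⬝ᵥ fun i => ∫ ω, X ω i ∂μ := by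
  simp only [dotProduct]
  rw [integral_finsetSum _ fun i _ => (hX i).const_mul (v i)]
  simp only [integral_const_mul]

theorem integral_dotProduct_inv_mean_mul {X : Ω → ι → 𝕜} (hX : ∀ i, ∫ ω, X ω i ∂μ ≠ 0)
    (v y : ι → 𝕜) :
    ∫ ω, v ⬝ᵥ ((fun i => (∫ ω', X ω' i ∂μ)⁻¹) * (X ω * y)) ∂μ = v ⬝ᵥ y := by
  have hint (i : ι) : Integrable (fun ω => X ω i) μ := .of_integral_ne_zero (hX i)
  have hterm (i : ι) :
      Integrable (fun ω => ((fun j => (∫ ω', X ω' j ∂μ)⁻¹) * (X ω * y)) i) μ :=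
    ((hint i).mul_const (y i)).const_mul _
  rw [integral_const_dotProduct hterm]
  congr 1 with i
  simp only [Pi.mul_apply, integral_const_mul, integral_mul_const]
  exact inv_mul_cancel_left₀ (hX i) (y i)

end InverseMeanWeighting

section ZeroOneValued

variable {Ω : Type*} [MeasurableSpace Ω] {μ : Measure Ω} {f g : Ω → ℝ}

theorem integral_eq_measureReal_of_zero_or_one (hf : AEMeasurable f μ)
    (hf01 : ∀ᵐ ω ∂μ, f ω = 0 ∨ f ω = 1) : ∫ ω, f ω ∂μ = μ.real {ω | f ω = 1} := by
  have hS : NullMeasurableSet {ω | f ω = 1} μ := hf.nullMeasurable (measurableSet_singleton 1)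
  have hind : f =ᵐ[μ] {ω | f ω = 1}.indicator 1 := by
    filter_upwards [hf01] with ω hω
    rcases hω with h | h <;> simp [Set.indicator, h]
  rw [integral_congr_ae hind, integral_indicator₀ hS]
  simp

theorem integral_mul_eq_measureReal_of_zero_or_one (hf : AEMeasurable f μ) (hg : AEMeasurable g μ)
    (hf01 : ∀ᵐ ω ∂μ, f ω = 0 ∨ f ω = 1) (hg01 : ∀ᵐ ω ∂μ, g ω = 0 ∨ g ω = 1) :
    ∫ ω, f ω * g ω ∂μ = μ.real {ω | f ω = 1 ∧ g ω = 1} := by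
  have hmul01 : ∀ᵐ ω ∂μ, f ω * g ω = 0 ∨ f ω * g ω = 1 := by
    filter_upwards [hf01, hg01] with ω hfω hgω
    rcases hfω with h | h <;> rcases hgω with h' | h' <;> simp [h, h']
  have hset : {ω | f ω * g ω = 1} =ᵐ[μ] {ω | f ω = 1 ∧ g ω = 1} := by
    refine Filter.eventuallyEq_set.2 ?_
    filter_upwards [hf01, hg01] with ω hfω hgω
    rcases hfω with h | h <;> rcases hgω with h' | h' <;> simp [h, h']
  exact (integral_eq_measureReal_of_zero_or_one (hf.mul hg) hmul01).trans (measureReal_congr hset)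

end ZeroOneValued

/-- The vector `m(b₁, b₂) = (b₁b₂, b₁, b₂, 1)` of multilinear monomials, in the order that makes the
change of coordinates to `svec` lower triangular. -/
def pairMonomials (b₁ b₂ : ℝ) : Fin 4 → ℝ :=
  ![b₁ * b₂, b₁, b₂, 1]

/-- The change of coordinates (inclusion-exclusion) from `pairMonomials` to `svec`. -/
def inclusionExclusion : Matrix (Fin 4) (Fin 4) ℝ :=
  !![1, 0, 0, 0;
     -1, 1, 0, 0;
     -1, 0, 1, 0;
     1, -1, -1, 1]

/-- The matrix `A` that removes the examination bias from the pair type of two clicks, as a function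
of the weights `a₁`, `a₂` of the single clicks and `a₁₂` of the joint click. -/
def pairCorrection (a₁ a₂ a₁₂ : ℝ) : Matrix (Fin 4) (Fin 4) ℝ :=
  !![a₁₂, 0, 0, 0;
     a₁ - a₁₂, a₁, 0, 0;
     a₂ - a₁₂, 0, a₂, 0;
     1 - a₁ - a₂ + a₁₂, 1 - a₁, 1 - a₂, 1]

theorem pairMonomials_mul (b₁ b₂ d₁ d₂ : ℝ) :
    pairMonomials (b₁ * d₁) (b₂ * d₂) = pairMonomials b₁ b₂ * pairMonomials d₁ d₂ := by
  ext i
  fin_cases i <;> simp [pairMonomials, mul_mul_mul_comm]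

theorem inclusionExclusion_mulVec_pairMonomials (b₁ b₂ : ℝ) :
    inclusionExclusion *ᵥ pairMonomials b₁ b₂ = svec b₁ b₂ := by
  ext i
  fin_cases i <;>
    simp [inclusionExclusion, pairMonomials, svec, mulVec, dotProduct, Fin.sum_univ_four] <;> ring

theorem pairCorrection_mul_inclusionExclusion (a₁ a₂ a₁₂ : ℝ) :
    pairCorrection a₁ a₂ a₁₂ * inclusionExclusion =
      inclusionExclusion * diagonal ![a₁₂, a₁, a₂, 1] := by
  ext i j
  fin_cases i <;> fin_cases j <;>
    simp [pairCorrection, inclusionExclusion, mul_apply, Fin.sum_univ_four] <;> ring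

theorem pairCorrection_mulVec_svec (a₁ a₂ a₁₂ b₁ b₂ : ℝ) :
    pairCorrection a₁ a₂ a₁₂ *ᵥ svec b₁ b₂ =
      inclusionExclusion *ᵥ (![a₁₂, a₁, a₂, 1] * pairMonomials b₁ b₂) := by
  rw [← inclusionExclusion_mulVec_pairMonomials, mulVec_mulVec,
    pairCorrection_mul_inclusionExclusion, ← mulVec_mulVec]
  congr 1 with i
  exact mulVec_diagonal _ _ i

section Unbiasedness

variable {Ω : Type*} [MeasurableSpace Ω] (P : Measure Ω) [IsProbabilityMeasure P]

theorem integral_pairMonomials (e₁ e₂ : Ω → ℝ) :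
    (fun i => ∫ ω, pairMonomials (e₁ ω) (e₂ ω) i ∂P) =
      ![∫ ω, e₁ ω * e₂ ω ∂P, ∫ ω, e₁ ω ∂P, ∫ ω, e₂ ω ∂P, 1] := by
  ext i
  fin_cases i <;> simp [pairMonomials]

theorem stmt_15_general (r₁ r₂ : ℝ) {e₁ e₂ : Ω → ℝ} (h₁ : ∫ ω, e₁ ω ∂P ≠ 0)
    (h₂ : ∫ ω, e₂ ω ∂P ≠ 0) (h₁₂ : ∫ ω, e₁ ω * e₂ ω ∂P ≠ 0) (z : Fin 4 → ℝ) :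
    ∫ ω, z ⬝ᵥ pairCorrection (∫ ω', e₁ ω' ∂P)⁻¹ (∫ ω', e₂ ω' ∂P)⁻¹ (∫ ω', e₁ ω' * e₂ ω' ∂P)⁻¹ *ᵥ
      svec (e₁ ω * r₁) (e₂ ω * r₂) ∂P = z ⬝ᵥ svec r₁ r₂ := by
  have hmean := congrFun (integral_pairMonomials P e₁ e₂)
  have hmean_ne (i : Fin 4) : ∫ ω, pairMonomials (e₁ ω) (e₂ ω) i ∂P ≠ 0 := by
    rw [hmean]
    fin_cases i <;> simp [h₁, h₂, h₁₂]
  have hweights : ![(∫ ω, e₁ ω * e₂ ω ∂P)⁻¹, (∫ ω, e₁ ω ∂P)⁻¹, (∫ ω, e₂ ω ∂P)⁻¹, 1] =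
      fun i => (∫ ω, pairMonomials (e₁ ω) (e₂ ω) i ∂P)⁻¹ := by
    ext i
    rw [hmean]
    fin_cases i <;> simp
  simp only [pairCorrection_mulVec_svec, pairMonomials_mul, dotProduct_mulVec, hweights]
  rw [integral_dotProduct_inv_mean_mul hmean_ne, ← dotProduct_mulVec,
    inclusionExclusion_mulVec_pairMonomials]

end Unbiasedness

theorem stmt_15 {Ω : Type*} [MeasurableSpace Ω] (P : Measure Ω) [IsProbabilityMeasure P]
    (r₁ r₂ : ℝ) (hr₁ : r₁ = 0 ∨ r₁ = 1) (hr₂ : r₂ = 0 ∨ r₂ = 1)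
    (e₁ e₂ : Ω → ℝ) (he₁ : Measurable e₁) (he₂ : Measurable e₂)
    (he₁bin : ∀ ω, e₁ ω = 0 ∨ e₁ ω = 1) (he₂bin : ∀ ω, e₂ ω = 0 ∨ e₂ ω = 1)
    (c₁ c₂ : Ω → ℝ) (hc₁ : ∀ ω, c₁ ω = e₁ ω * r₁) (hc₂ : ∀ ω, c₂ ω = e₂ ω * r₂)
    (p₁ p₂ p₁₂ : ℝ)
    (hp₁ : p₁ = (P {ω | e₁ ω = 1}).toReal)
    (hp₂ : p₂ = (P {ω | e₂ ω = 1}).toReal)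
    (hp₁₂ : p₁₂ = (P {ω | e₁ ω = 1 ∧ e₂ ω = 1}).toReal)
    (hp₁pos : 0 < p₁) (hp₂pos : 0 < p₂) (hp₁₂pos : 0 < p₁₂)
    (a₁ a₂ a₁₂ : ℝ) (ha₁ : a₁ = 1 / p₁) (ha₂ : a₂ = 1 / p₂) (ha₁₂ : a₁₂ = 1 / p₁₂)
    (A : Matrix (Fin 4) (Fin 4) ℝ)
    (hA : A = !![a₁₂, 0, 0, 0;
                 a₁ - a₁₂, a₁, 0, 0;
                 a₂ - a₁₂, 0, a₂, 0;
                 1 - a₁ - a₂ + a₁₂, 1 - a₁, 1 - a₂, 1]) :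
    ∀ z : Fin 4 → ℝ,
      (∫ ω, z ⬝ᵥ A.mulVec (svec (c₁ ω) (c₂ ω)) ∂P) = z ⬝ᵥ svec r₁ r₂ := by
  have hmean₁ : p₁ = ∫ ω, e₁ ω ∂P := hp₁.trans
    (integral_eq_measureReal_of_zero_or_one he₁.aemeasurable (.of_forall he₁bin)).symm
  have hmean₂ : p₂ = ∫ ω, e₂ ω ∂P := hp₂.trans
    (integral_eq_measureReal_of_zero_or_one he₂.aemeasurable (.of_forall he₂bin)).symm
  have hmean₁₂ : p₁₂ = ∫ ω, e₁ ω * e₂ ω ∂P := hp₁₂.trans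
    (integral_mul_eq_measureReal_of_zero_or_one he₁.aemeasurable he₂.aemeasurable
      (.of_forall he₁bin) (.of_forall he₂bin)).symm
  have hA' : A = pairCorrection (∫ ω, e₁ ω ∂P)⁻¹ (∫ ω, e₂ ω ∂P)⁻¹ (∫ ω, e₁ ω * e₂ ω ∂P)⁻¹ := by
    rw [hA, ha₁, ha₂, ha₁₂, hmean₁, hmean₂, hmean₁₂, one_div, one_div, one_div, pairCorrection]
  simp only [hA', hc₁, hc₂]
  exact stmt_15_general P r₁ r₂ (hmean₁ ▸ hp₁pos.ne') (hmean₂ ▸ hp₂pos.ne') (hmean₁₂ ▸ hp₁₂pos.ne')
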